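/- Let G be a finite group with a normal subgroup N, and let P be a Sylow p-subgroup of G acting fixed-point-freely on N (i.e., C_N(x) = 1 for every nontrivial x ∈ P). If χ is an irreducible complex character of G with N not contained in ker χ, then p does not divide cod(χ) = |G : ker χ| / χ(1). -/

import Mathlib

open Module

theorem aux_schur {G : Type} [Group G] [Fintype G] (W : FDRep ℂ G) (hW : CategoryTheory.Simple W)
    (f : W →ₗ[ℂ] W) (hf : ∀ g, W.ρ g ∘ₗ f = f ∘ₗ W.ρ g) : ∃ c : ℂ, f = c • LinearMap.id := by
  have h1 : finrank ℂ (W ⟶ W) = 1 := by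
    rw [FDRep.finrank_hom_simple_simple, if_pos ⟨CategoryTheory.Iso.refl _⟩]
  rw [← LinearEquiv.finrank_eq (Representation.linHom.invariantsEquivFDRepHom W W)] at h1
  have key : ∀ f : W →ₗ[ℂ] W, (∀ g, W.ρ g ∘ₗ f = f ∘ₗ W.ρ g) →
      f ∈ Representation.invariants (Representation.linHom W.ρ W.ρ) := by
    intro f hf g
    rw [Representation.linHom_apply]
    have : W.ρ g ∘ₗ W.ρ g⁻¹ = LinearMap.id := by
      change W.ρ g * W.ρ g⁻¹ = 1
      rw [← map_mul, mul_inv_cancel, map_one]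
    rw [← LinearMap.comp_assoc, hf, LinearMap.comp_assoc, this, LinearMap.comp_id]
  by_cases h0 : (LinearMap.id : W →ₗ[ℂ] W) = 0
  · refine ⟨0, ?_⟩
    rw [← LinearMap.comp_id f, h0]; simp
  · obtain ⟨c, hc⟩ := (finrank_eq_one_iff_of_nonzero'
      (⟨LinearMap.id, key _ (fun g => rfl)⟩ :
        Representation.invariants (Representation.linHom W.ρ W.ρ))
        (fun h => h0 (congrArg Subtype.val h))).1 h1 ⟨f, key f hf⟩
    exact ⟨c, (congrArg Subtype.val hc).symm⟩

theorem aux_int_char {G : Type} [Group G] [Fintype G] (W : FDRep ℂ G) (g : G) :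
    IsIntegral ℤ (W.character g) := by
  unfold FDRep.character
  rw [Module.End.trace_eq_sum_roots_charpoly_of_splits (IsAlgClosed.splits _)]
  refine IsIntegral.multiset_sum ?_
  intro x hx
  have hx' : Module.End.HasEigenvalue (W.ρ g) x := by
    rw [Module.End.hasEigenvalue_iff_isRoot_charpoly]
    exact Polynomial.isRoot_of_mem_roots hx
  obtain ⟨v, hv⟩ := hx'.exists_hasEigenvector
  have h1 := hv.pow_apply (Fintype.card G)
  rw [← map_pow, pow_card_eq_one, map_one] at h1
  have h2 : (x ^ Fintype.card G - 1) • v = 0 := by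
    rw [sub_smul, ← h1]; simp
  have h3 : x ^ Fintype.card G = 1 := by
    rcases smul_eq_zero.1 h2 with h | h
    · exact sub_eq_zero.1 h
    · exact absurd h hv.2
  exact IsIntegral.of_pow Fintype.card_pos (h3 ▸ isIntegral_one)

theorem aux_int_scalar {G : Type} [Group G] [Fintype G] (W : FDRep ℂ G) {ι : Type} (s : Finset ι)
    (a : ι → ℂ) (ha : ∀ i, IsIntegral ℤ (a i)) (t : ι → G) (c : ℂ) [Nontrivial W]
    (h : ∑ i ∈ s, a i • W.ρ (t i) = c • (LinearMap.id : W →ₗ[ℂ] W)) : IsIntegral ℤ c := by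
  let R := integralClosure ℤ ℂ
  let φ : MonoidAlgebra R G →ₐ[R] Module.End ℂ W := MonoidAlgebra.lift R _ G W.ρ
  let z : MonoidAlgebra R G := ∑ i ∈ s, MonoidAlgebra.single (t i) (⟨a i, ha i⟩ : R)
  have hz : IsIntegral R z := IsIntegral.of_finite R z
  have h2 : φ z = algebraMap ℂ (Module.End ℂ W) c := by
    simp only [z, φ, map_sum, MonoidAlgebra.lift_single]
    rw [Algebra.algebraMap_eq_smul_one]
    exact h
  have h3 := hz.map φ
  rw [h2] at h3
  have h4 : IsIntegral R c := (isIntegral_algebraMap_iff (algebraMap ℂ (Module.End ℂ W)).injective).1 h3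
  exact isIntegral_trans (R := ℤ) (A := R) c h4

theorem aux_inv {G : Type} [Group G] [Fintype G] (W : FDRep ℂ G) (H : Subgroup G) [Fintype H] :
    ∑ h : H, W.character h = (Nat.card H : ℂ) * finrank ℂ (Representation.invariants (W.ρ.comp H.subtype)) := by
  have : (Nat.card H : ℂ) ≠ 0 := Nat.cast_ne_zero.2 Nat.card_pos.ne'
  let _ : Invertible (Nat.card H : ℂ) := invertibleOfNonzero this
  rw [← Representation.card_inv_mul_sum_char_eq_finrank, mul_inv_cancel_left₀ this]
  rfl

theorem aux_ker {G : Type} [Group G] [Fintype G] (W : FDRep ℂ G)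
    (K : Subgroup G) (hK : ∀ g : G, g ∈ K ↔ W.character g = W.character 1) (k : G) (hk : k ∈ K) :
    W.ρ k = LinearMap.id := by
  classical
  have h := aux_inv W K
  have h0 : (Nat.card K : ℂ) ≠ 0 := Nat.cast_ne_zero.2 Nat.card_pos.ne'
  rw [Finset.sum_congr rfl (fun x _ => (hK x.1).1 x.2), Finset.sum_const, Finset.card_univ,
    nsmul_eq_mul, Fintype.card_eq_nat_card, FDRep.char_one] at h
  have h2 := Nat.cast_injective (mul_left_cancel₀ h0 h)
  have h3 := Submodule.eq_top_of_finrank_eq h2.symm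
  ext v
  have h4 : v ∈ Representation.invariants (W.ρ.comp K.subtype) := by rw [h3]; trivial
  exact h4 ⟨k, hk⟩

theorem aux_sum_comm {G : Type} [Group G] [Fintype G] (W : FDRep ℂ G) {ι : Type} [Fintype ι]
    (a : ι → ℂ) (t : ι → G) (e : G → ι ≃ ι)
    (he : ∀ g i, g * t i * g⁻¹ = t (e g i)) (ha : ∀ g i, a (e g i) = a i) (g : G) :
    W.ρ g ∘ₗ (∑ i, a i • W.ρ (t i)) = (∑ i, a i • W.ρ (t i)) ∘ₗ W.ρ g := by
  change W.ρ g * (∑ i, a i • W.ρ (t i)) = (∑ i, a i • W.ρ (t i)) * W.ρ g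
  rw [Finset.mul_sum, Finset.sum_mul, ← Equiv.sum_comp (e g) (fun i => a i • W.ρ (t i) * W.ρ g)]
  refine Finset.sum_congr rfl fun i _ => ?_
  rw [ha, ← he, mul_smul_comm, smul_mul_assoc, ← map_mul, ← map_mul]
  congr 2
  group

theorem aux_dvd {G : Type} [Group G] [Fintype G] (W : FDRep ℂ G) (hW : CategoryTheory.Simple W)
    (K : Subgroup G) (hK : ∀ g : G, g ∈ K ↔ W.character g = W.character 1) [Nontrivial W] :
    finrank ℂ W ∣ K.index := by
  classical
  obtain ⟨c, hc⟩ := aux_schur W hW (∑ g : G, W.character g⁻¹ • W.ρ g)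
    (aux_sum_comm W (fun g => W.character g⁻¹) id (fun g => (MulAut.conj g).toEquiv)
      (fun g i => by simp) (fun g i => by
        have := W.char_conj i⁻¹ g
        simpa [mul_assoc] using this))
  have hG0 : (Nat.card G : ℂ) ≠ 0 := Nat.cast_ne_zero.2 Nat.card_pos.ne'
  have hK0 : (Nat.card K : ℂ) ≠ 0 := Nat.cast_ne_zero.2 Nat.card_pos.ne'
  have hd0 : (finrank ℂ W : ℂ) ≠ 0 := Nat.cast_ne_zero.2 finrank_pos.ne'
  let _ : Invertible (Nat.card G : ℂ) := invertibleOfNonzero hG0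
  have h1 := FDRep.char_orthonormal W W
  rw [if_pos ⟨CategoryTheory.Iso.refl _⟩, inv_mul_eq_one₀ hG0] at h1
  have h2 := congrArg (LinearMap.trace ℂ W) hc
  rw [map_sum, map_smul, LinearMap.trace_id, smul_eq_mul] at h2
  have h3 : (Nat.card G : ℂ) = c * finrank ℂ W := by
    rw [h1, ← h2]
    refine Finset.sum_congr rfl fun g _ => ?_
    rw [map_smul, smul_eq_mul, mul_comm]; rfl
  have hinv : ∀ g k : G, k ∈ K → W.ρ (g * k) = W.ρ g := by
    intro g k hk
    rw [map_mul, aux_ker W K hK k hk]; rfl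
  have hinv2 : ∀ g k : G, k ∈ K → W.character (g * k)⁻¹ = W.character g⁻¹ := by
    intro g k hk
    rw [mul_inv_rev, FDRep.char_mul_comm]
    unfold FDRep.character
    rw [hinv _ _ (K.inv_mem hk)]
  have h4 : ∑ g : G, W.character g⁻¹ • W.ρ g =
      (Nat.card K : ℂ) • ∑ q : G ⧸ K, W.character (q.out)⁻¹ • W.ρ q.out := by
    rw [← Finset.sum_fiberwise Finset.univ (fun g : G => (g : G ⧸ K)), Finset.smul_sum]
    refine Finset.sum_congr rfl fun q _ => ?_
    have : ∀ g ∈ Finset.univ.filter (fun g : G => (g : G ⧸ K) = q),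
        W.character g⁻¹ • W.ρ g = W.character (q.out)⁻¹ • W.ρ q.out := by
      intro g hg
      have hg' : ((q.out : G) : G ⧸ K) = g := by
        rw [QuotientGroup.out_eq', (Finset.mem_filter.1 hg).2]
      have := QuotientGroup.eq.1 hg'
      have e : g = q.out * (q.out⁻¹ * g) := by simp
      rw [e, hinv _ _ this, hinv2 _ _ this]
    rw [Finset.sum_congr rfl this, Finset.sum_const, ← Nat.cast_smul_eq_nsmul ℂ]
    congr 2
    obtain ⟨x, rfl⟩ := QuotientGroup.mk_surjective q
    rw [Nat.card_eq_fintype_card, ← Finset.card_univ]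
    symm
    refine Finset.card_bij (fun k _ => x * k.1) ?_ ?_ ?_
    · intro k _; simp
    · intro a _ b _ h; exact Subtype.ext (mul_left_cancel h)
    · intro b hb
      have := QuotientGroup.eq.1 (Finset.mem_filter.1 hb).2.symm
      exact ⟨⟨_, this⟩, Finset.mem_univ _, by simp⟩
  have h5 : ∑ q : G ⧸ K, W.character (q.out)⁻¹ • W.ρ q.out =
      (c / Nat.card K) • (LinearMap.id : W →ₗ[ℂ] W) := by
    rw [div_eq_inv_mul, mul_smul, ← hc, h4, inv_smul_smul₀ hK0]
  have h6 := aux_int_scalar W Finset.univ (fun q : G ⧸ K => W.character (q.out)⁻¹)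
    (fun q => aux_int_char W _) (fun q => q.out) _ h5
  have h7 : c / Nat.card K = algebraMap ℚ ℂ ((K.index : ℚ) / finrank ℂ W) := by
    have := K.card_mul_index
    rw [← this] at h3
    push_cast at h3
    simp only [map_div₀, map_natCast]
    rw [div_eq_div_iff hK0 hd0, ← h3, mul_comm]
  rw [h7, isIntegral_algebraMap_iff (algebraMap ℚ ℂ).injective,
    IsIntegrallyClosed.isIntegral_iff] at h6
  obtain ⟨m, hm⟩ := h6
  have hd0' : (finrank ℂ W : ℚ) ≠ 0 := Nat.cast_ne_zero.2 finrank_pos.ne'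
  rw [eq_div_iff hd0'] at hm
  have : (K.index : ℤ) = m * finrank ℂ W := by
    have := hm.symm
    simp only [algebraMap_int_eq, eq_intCast] at this
    exact_mod_cast this
  exact Int.natCast_dvd_natCast.1 ⟨m, by rw [this, mul_comm]⟩

theorem aux_van {G : Type} [Group G] [Fintype G] (W : FDRep ℂ G) (hW : CategoryTheory.Simple W)
    (N : Subgroup G) (hN : N.Normal)
    (K : Subgroup G) (hK : ∀ g : G, g ∈ K ↔ W.character g = W.character 1) (hNK : ¬ N ≤ K)
    (x : G) (hx : ∀ n ∈ N, x * n * x⁻¹ = n → n = 1) : W.character x = 0 := by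
  classical
  obtain ⟨c, hc⟩ := aux_schur W hW (∑ n : N, (1 : ℂ) • W.ρ n)
    (aux_sum_comm W (fun _ => 1) (fun n : N => (n : G)) (fun g => (MulAut.conjNormal g).toEquiv)
      (fun g i => by simp) (fun g i => rfl))
  simp only [one_smul] at hc
  have hc0 : c = 0 := by
    by_contra hne
    apply hNK
    intro n hn
    rw [hK]
    have h1 : (∑ m : N, W.ρ m) * W.ρ n = ∑ m : N, W.ρ m := by
      rw [Finset.sum_mul, ← Equiv.sum_comp (Equiv.mulRight (⟨n, hn⟩ : N)) (fun m : N => W.ρ m)]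
      refine Finset.sum_congr rfl fun i _ => ?_
      rw [← map_mul]; rfl
    rw [hc] at h1
    have h2 : c • W.ρ n = c • (1 : W →ₗ[ℂ] W) := h1
    have h3 := smul_right_injective _ hne h2
    unfold FDRep.character
    rw [h3, map_one W.ρ]
  rw [hc0, zero_smul] at hc
  let f : N → N := fun n => ⟨n * (x * n⁻¹ * x⁻¹), N.mul_mem n.2 (hN.conj_mem _ (N.inv_mem n.2) x)⟩
  have hf : Function.Injective f := by
    intro n m h
    have h' : (n : G) * (x * (n : G)⁻¹ * x⁻¹) = m * (x * (m : G)⁻¹ * x⁻¹) := congrArg Subtype.val h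
    have h2 : (n : G) * x * (n : G)⁻¹ = m * x * (m : G)⁻¹ := by
      apply mul_right_cancel (b := x⁻¹)
      simpa [mul_assoc] using h'
    have h3 := hx ((m : G)⁻¹ * n) (N.mul_mem (N.inv_mem m.2) n.2) (by
      have h4 : (n : G) * x = m * x * (m : G)⁻¹ * n := by rw [← h2]; simp
      calc x * ((m : G)⁻¹ * n) * x⁻¹ = (m : G)⁻¹ * (m * x * (m : G)⁻¹ * n) * x⁻¹ := by group
        _ = _ := by rw [← h4]; group)
    exact Subtype.ext (inv_mul_eq_one.1 h3).symm
  have hb : Function.Bijective f := Finite.injective_iff_bijective.1 hf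
  have h1 : ∑ n : N, W.character (f n * x) = 0 := by
    rw [hb.sum_comp (fun n : N => W.character (n * x))]
    unfold FDRep.character
    simp only [map_mul]
    rw [← map_sum, ← Finset.sum_mul, hc, zero_mul, map_zero]
  have h2 : ∀ n : N, W.character (f n * x) = W.character x := by
    intro n
    rw [← W.char_conj x n]
    congr 1
    simp [f, mul_assoc]
  simp only [h2, Finset.sum_const, Finset.card_univ, nsmul_eq_mul] at h1
  exact (mul_eq_zero.1 h1).resolve_left (Nat.cast_ne_zero.2 Fintype.card_ne_zero)

/-- If a Sylow `p`-subgroup `P` of `G` acts (by conjugation) fixed-point-freely on a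
normal subgroup `N`, and `χ` is an irreducible complex character of `G` whose kernel
does not contain `N`, then `p` does not divide `cod χ = |G : ker χ| / χ(1)`. -/
theorem stmt_5 (G : Type) [Group G] [Fintype G] (p : ℕ) [Fact p.Prime]
    (N : Subgroup G) (hN : N.Normal) (P : Sylow p G)
    (hfpf : ∀ x : G, x ∈ P → x ≠ 1 → ∀ n ∈ N, x * n * x⁻¹ = n → n = 1)
    (W : FDRep ℂ G) (hW : CategoryTheory.Simple W)
    (K : Subgroup G) (hK : ∀ g : G, g ∈ K ↔ W.character g = W.character 1)
    (hNK : ¬ N ≤ K) :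
    ¬ p ∣ K.index / Module.finrank ℂ W := by
  classical
  have hnt : Nontrivial W := by
    by_contra h
    rw [not_nontrivial_iff_subsingleton] at h
    apply hNK
    intro n _
    rw [hK]
    unfold FDRep.character
    rw [Subsingleton.elim (W.ρ n) (W.ρ 1)]
  have hdvd := aux_dvd W hW K hK
  have hPd : Nat.card (P : Subgroup G) ∣ finrank ℂ W := by
    have h := aux_inv W (P : Subgroup G)
    rw [Finset.sum_eq_single (1 : (P : Subgroup G))] at h
    · rw [Subgroup.coe_one, FDRep.char_one] at h
      exact ⟨_, by exact_mod_cast h⟩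
    · intro b _ hb
      exact aux_van W hW N hN K hK hNK b
        (hfpf b b.2 (fun h => hb (Subtype.ext h)))
    · intro h; exact absurd (Finset.mem_univ _) h
  intro hp
  obtain ⟨q, hq⟩ := hdvd
  have hd : 0 < finrank ℂ W := finrank_pos
  rw [hq, Nat.mul_div_cancel_left _ hd] at hp
  have h1 : Nat.card (P : Subgroup G) * p ∣ Nat.card G :=
    ((mul_dvd_mul hPd hp).trans (dvd_of_eq hq.symm)).trans K.index_dvd_card
  have h2 : Nat.card (P : Subgroup G) * p ∣ Nat.card (P : Subgroup G) * (P : Subgroup G).index := by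
    rwa [Subgroup.card_mul_index]
  exact P.not_dvd_index (Nat.dvd_of_mul_dvd_mul_left Nat.card_pos h2)
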